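/- For c > 0, the single-bond partition function z(c) = ∫_{U(N)} e^{-c ‖1 - g‖²_{H-S}} dσ(g) satisfies z(c) ≤ (π/(2√2))^{N²} c^{-N²/2} · (2π)^{-N/2} ∏_{j=1}^{N-1} j!, treating c^{-N²/2} as [c^{-1/2}]^{N²}. -/

import Mathlib

open Matrix MeasureTheory

noncomputable def hsNormSq {N : ℕ} (M : Matrix (Fin N) (Fin N) ℂ) : ℝ :=
  (Mᴴ * M).trace.re

noncomputable instance (N : ℕ) : MeasurableSpace (Matrix.unitaryGroup (Fin N) ℂ) :=
  borel _

instance (N : ℕ) : BorelSpace (Matrix.unitaryGroup (Fin N) ℂ) :=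
  ⟨rfl⟩

namespace SingleBond

/-- The unitary group is compact. -/
instance compactU (N : ℕ) : CompactSpace (Matrix.unitaryGroup (Fin N) ℂ) := by
  refine isCompact_iff_compactSpace.1 (?_ : IsCompact
    (Matrix.unitaryGroup (Fin N) ℂ : Set (Matrix (Fin N) (Fin N) ℂ)))
  have hK : IsCompact (Set.pi Set.univ fun _ : Fin N => Set.pi Set.univ
      fun _ : Fin N => Metric.closedBall (0 : ℂ) 1) :=
    isCompact_univ_pi fun _ => isCompact_univ_pi fun _ => isCompact_closedBall _ _
  have hcl : IsClosed ((Matrix.unitaryGroup (Fin N) ℂ : Set (Matrix (Fin N) (Fin N) ℂ))) := by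
    have : ((Matrix.unitaryGroup (Fin N) ℂ : Set (Matrix (Fin N) (Fin N) ℂ)))
        = {A | A * star A = 1} := by
      ext A
      exact mem_unitaryGroup_iff
    rw [this]
    exact isClosed_eq (by fun_prop) continuous_const
  refine IsCompact.of_isClosed_subset hK hcl ?_
  intro A hA i _ j _
  simpa using entry_norm_bound_of_unitary hA i j

lemma integrable_of_cont {N : ℕ} (μ : Measure (Matrix.unitaryGroup (Fin N) ℂ))
    [IsProbabilityMeasure μ] {f : Matrix.unitaryGroup (Fin N) ℂ → ℝ} (hf : Continuous f) :
    Integrable f μ :=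
  hf.integrable_of_hasCompactSupport (HasCompactSupport.of_compactSpace f)

lemma cont_entry {N : ℕ} (i j : Fin N) :
    Continuous (fun g : Matrix.unitaryGroup (Fin N) ℂ => (g : Matrix (Fin N) (Fin N) ℂ) i j) :=
  continuous_subtype_val.matrix_elem i j

lemma hs_eq {N : ℕ} (g : Matrix.unitaryGroup (Fin N) ℂ) :
    hsNormSq (1 - (g : Matrix (Fin N) (Fin N) ℂ))
      = 2 * N - 2 * ((g : Matrix (Fin N) (Fin N) ℂ).trace).re := by
  have h : (g : Matrix (Fin N) (Fin N) ℂ)ᴴ * (g : Matrix (Fin N) (Fin N) ℂ) = 1 :=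
    mem_unitaryGroup_iff'.1 g.2
  unfold hsNormSq
  have : (1 - (g : Matrix (Fin N) (Fin N) ℂ))ᴴ * (1 - (g : Matrix (Fin N) (Fin N) ℂ))
      = 1 - (g : Matrix (Fin N) (Fin N) ℂ)ᴴ - (g : Matrix (Fin N) (Fin N) ℂ) + 1 := by
    rw [conjTranspose_sub, conjTranspose_one, sub_mul, one_mul, mul_sub, mul_one, h]
    abel
  rw [this]
  simp [trace_sub, trace_add, trace_one, trace_conjTranspose]
  ring

/-- A rank-one correction of the lower right block of a unitary matrix is unitary. -/
lemma block_unitary {n : ℕ} (g : Matrix.unitaryGroup (Fin (n + 1)) ℂ) (φ : ℂ)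
    (hφ : -1 - φ * g.1 0 0 - star (φ * g.1 0 0)
      + star φ * φ * (1 - star (g.1 0 0) * g.1 0 0) = 0) :
    (Matrix.of fun i j : Fin n => g.1 i.succ j.succ + φ * g.1 i.succ 0 * g.1 0 j.succ)
      ∈ Matrix.unitaryGroup (Fin n) ℂ := by
  have h : star g.1 * g.1 = 1 := mem_unitaryGroup_iff'.1 g.2
  have e : ∀ i j, star (g.1 0 i) * g.1 0 j + ∑ k : Fin n, star (g.1 k.succ i) * g.1 k.succ j
      = (1 : Matrix (Fin (n + 1)) (Fin (n + 1)) ℂ) i j := by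
    intro i j
    rw [← h, Matrix.mul_apply, Fin.sum_univ_succ]
    rfl
  rw [mem_unitaryGroup_iff']
  ext i j
  have e1 := e i.succ j.succ
  have e2 := e i.succ 0
  have e3 := e 0 j.succ
  have e4 := e 0 0
  have hone : (1 : Matrix (Fin (n + 1)) (Fin (n + 1)) ℂ) i.succ j.succ
      = (1 : Matrix (Fin n) (Fin n) ℂ) i j := by
    simp [Matrix.one_apply]
  rw [hone] at e1
  rw [Matrix.one_apply_ne (Fin.succ_ne_zero i)] at e2
  rw [Matrix.one_apply_ne (Fin.succ_ne_zero j).symm] at e3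
  rw [Matrix.one_apply_eq] at e4
  rw [Matrix.mul_apply]
  simp only [Matrix.star_apply, Matrix.of_apply]
  have key : ∑ k : Fin n, star (g.1 k.succ i.succ + φ * g.1 k.succ 0 * g.1 0 i.succ)
      * (g.1 k.succ j.succ + φ * g.1 k.succ 0 * g.1 0 j.succ)
      = (∑ k : Fin n, star (g.1 k.succ i.succ) * g.1 k.succ j.succ)
        + φ * g.1 0 j.succ * (∑ k : Fin n, star (g.1 k.succ i.succ) * g.1 k.succ 0)
        + star φ * star (g.1 0 i.succ) * (∑ k : Fin n, star (g.1 k.succ 0) * g.1 k.succ j.succ)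
        + star φ * φ * star (g.1 0 i.succ) * g.1 0 j.succ
          * (∑ k : Fin n, star (g.1 k.succ 0) * g.1 k.succ 0) := by
    simp only [Finset.mul_sum, ← Finset.sum_add_distrib]
    refine Finset.sum_congr rfl fun k _ => ?_
    simp only [star_add, star_mul']
    ring
  rw [key]
  simp only [star_mul'] at hφ
  linear_combination e1 + φ * g.1 0 j.succ * e2 + star φ * star (g.1 0 i.succ) * e3
    + star φ * φ * star (g.1 0 i.succ) * g.1 0 j.succ * e4
    + star (g.1 0 i.succ) * g.1 0 j.succ * hφ

lemma cont_tr {n : ℕ} (c : ℝ) (V : Matrix (Fin n) (Fin n) ℂ) :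
    Continuous (fun h : Matrix.unitaryGroup (Fin n) ℂ =>
      Real.exp (2 * c * ((h : Matrix (Fin n) (Fin n) ℂ) * V).trace.re)) := by
  have : Continuous (fun h : Matrix.unitaryGroup (Fin n) ℂ =>
      ((h : Matrix (Fin n) (Fin n) ℂ) * V).trace) :=
    (continuous_subtype_val.matrix_mul continuous_const).matrix_trace
  fun_prop

lemma F_unitary {n : ℕ} (c : ℝ) (ν : Measure (Matrix.unitaryGroup (Fin n) ℂ))
    [ν.IsHaarMeasure] (V : Matrix (Fin n) (Fin n) ℂ) (hV : V ∈ Matrix.unitaryGroup (Fin n) ℂ) :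
    ∫ h : Matrix.unitaryGroup (Fin n) ℂ,
        Real.exp (2 * c * ((h : Matrix (Fin n) (Fin n) ℂ) * V).trace.re) ∂ν
      = ∫ h : Matrix.unitaryGroup (Fin n) ℂ,
        Real.exp (2 * c * (h : Matrix (Fin n) (Fin n) ℂ).trace.re) ∂ν := by
  rw [← integral_mul_left_eq_self (μ := ν) (fun h : Matrix.unitaryGroup (Fin n) ℂ =>
        Real.exp (2 * c * (h : Matrix (Fin n) (Fin n) ℂ).trace.re)) ⟨V, hV⟩]
  refine integral_congr_ae (Filter.Eventually.of_forall fun h => ?_)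
  simp only [Submonoid.coe_mul]
  rw [Matrix.trace_mul_comm]

lemma exists_phase (a : ℂ) : ∃ e : ℂ, e * a = (‖a‖ : ℂ) ∧ star e * e = 1 := by
  by_cases ha : a = 0
  · exact ⟨1, by simp [ha], by simp⟩
  · have h1 : (‖a‖ : ℂ) ≠ 0 := by simpa using ha
    have h2 : (starRingEnd ℂ) a * a = (‖a‖ : ℂ) ^ 2 := Complex.conj_mul' a
    refine ⟨star a / ‖a‖, ?_, ?_⟩
    · field_simp
      simpa using h2
    · simp only [star_div₀, Complex.star_def, Complex.conj_ofReal, Complex.conj_conj]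
      field_simp
      linear_combination h2

lemma block_le {n : ℕ} (c : ℝ) (ν : Measure (Matrix.unitaryGroup (Fin n) ℂ))
    [ν.IsHaarMeasure] [IsProbabilityMeasure ν] (g : Matrix.unitaryGroup (Fin (n + 1)) ℂ) :
    ∫ h : Matrix.unitaryGroup (Fin n) ℂ, Real.exp (2 * c *
        ((h : Matrix (Fin n) (Fin n) ℂ) * g.1.submatrix Fin.succ Fin.succ).trace.re) ∂ν
      ≤ ∫ h : Matrix.unitaryGroup (Fin n) ℂ,
        Real.exp (2 * c * (h : Matrix (Fin n) (Fin n) ℂ).trace.re) ∂ν := by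
  obtain ⟨e, he, he1⟩ := exists_phase (g.1 0 0)
  set r : ℝ := ‖g.1 0 0‖ with hr
  have hr0 : 0 ≤ r := norm_nonneg _
  have hr1 : r ≤ 1 := entry_norm_bound_of_unitary g.2 0 0
  have hse : star (e * g.1 0 0) = (r : ℂ) := by rw [he]; simp
  have haa : star (g.1 0 0) * g.1 0 0 = (r : ℂ) ^ 2 := Complex.conj_mul' _
  have hp : (1 + r : ℂ) ≠ 0 := by
    have : (1 + r : ℝ) ≠ 0 := by positivity
    exact_mod_cast this
  have hm : (Matrix.of fun i j : Fin n => g.1 i.succ j.succ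
      + (-e / (1 + r)) * g.1 i.succ 0 * g.1 0 j.succ) ∈ Matrix.unitaryGroup (Fin n) ℂ := by
    apply block_unitary
    have h1 : -e / (1 + r) * g.1 0 0 = -r / (1 + r) := by
      rw [← he]; ring
    have h2 : star (-e / (1 + r)) * (-e / (1 + r) : ℂ) = 1 / (1 + r) ^ 2 := by
      have : star (1 + r : ℂ) = 1 + r := by simp
      rw [star_div₀, this, star_neg]
      field_simp
      linear_combination he1
    rw [h1, h2, haa]
    simp only [star_div₀, star_neg, star_add, star_one, Complex.star_def, Complex.conj_ofReal]
    field_simp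
    ring
  rcases eq_or_lt_of_le hr1 with h | h
  · have hcol : ∀ k : Fin n, g.1 k.succ 0 = 0 := by
      have hu : star g.1 * g.1 = 1 := mem_unitaryGroup_iff'.1 g.2
      have e4 : (star g.1 * g.1) 0 0 = 1 := by rw [hu]; simp
      rw [Matrix.mul_apply, Fin.sum_univ_succ] at e4
      simp only [Matrix.star_apply] at e4
      rw [haa, h] at e4
      have e5 : ∑ k : Fin n, ‖g.1 k.succ 0‖ ^ 2 = 0 := by
        have : ((∑ k : Fin n, ‖g.1 k.succ 0‖ ^ 2 : ℝ) : ℂ) = 0 := by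
          push_cast
          simp only [← Complex.conj_mul']
          simpa using e4
        exact_mod_cast this
      rw [Finset.sum_eq_zero_iff_of_nonneg (fun _ _ => by positivity)] at e5
      intro k
      simpa using e5 k (Finset.mem_univ k)
    have : g.1.submatrix Fin.succ Fin.succ = (Matrix.of fun i j : Fin n => g.1 i.succ j.succ
      + (-e / (1 + r)) * g.1 i.succ 0 * g.1 0 j.succ) := by
      ext i j
      simp [hcol]
    rw [this, F_unitary c ν _ hm]
  · have hn : (1 - r : ℂ) ≠ 0 := by
      have : (1 - r : ℝ) ≠ 0 := by linarith
      exact_mod_cast this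
    have hp' : (Matrix.of fun i j : Fin n => g.1 i.succ j.succ
        + (e / (1 - r)) * g.1 i.succ 0 * g.1 0 j.succ) ∈ Matrix.unitaryGroup (Fin n) ℂ := by
      apply block_unitary
      have h1 : e / (1 - r) * g.1 0 0 = r / (1 - r) := by
        rw [← he]; ring
      have h2 : star (e / (1 - r)) * (e / (1 - r) : ℂ) = 1 / (1 - r) ^ 2 := by
        have : star (1 - r : ℂ) = 1 - r := by simp
        rw [star_div₀, this]
        field_simp
        linear_combination he1
      rw [h1, h2, haa]
      simp only [star_div₀, star_sub, star_one, Complex.star_def, Complex.conj_ofReal]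
      field_simp
      ring
    set Dp := (Matrix.of fun i j : Fin n => g.1 i.succ j.succ
        + (e / (1 - r)) * g.1 i.succ 0 * g.1 0 j.succ) with hDp
    set Dm := (Matrix.of fun i j : Fin n => g.1 i.succ j.succ
      + (-e / (1 + r)) * g.1 i.succ 0 * g.1 0 j.succ) with hDm
    have hD : g.1.submatrix Fin.succ Fin.succ
        = (((1 - r) / 2 : ℝ) : ℂ) • Dp + (((1 + r) / 2 : ℝ) : ℂ) • Dm := by
      ext i j
      simp only [hDp, hDm, Matrix.add_apply, Matrix.smul_apply, Matrix.of_apply,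
        Matrix.submatrix_apply, smul_eq_mul]
      push_cast
      field_simp
      ring
    have hpt : ∀ h : Matrix.unitaryGroup (Fin n) ℂ, Real.exp (2 * c *
        ((h : Matrix (Fin n) (Fin n) ℂ) * g.1.submatrix Fin.succ Fin.succ).trace.re)
        ≤ (1 - r) / 2 * Real.exp (2 * c * ((h : Matrix (Fin n) (Fin n) ℂ) * Dp).trace.re)
        + (1 + r) / 2 * Real.exp (2 * c * ((h : Matrix (Fin n) (Fin n) ℂ) * Dm).trace.re) := by
      intro h
      have hc := convexOn_exp.2 (Set.mem_univ
        (2 * c * ((h : Matrix (Fin n) (Fin n) ℂ) * Dp).trace.re)) (Set.mem_univ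
        (2 * c * ((h : Matrix (Fin n) (Fin n) ℂ) * Dm).trace.re))
        (show 0 ≤ (1 - r) / 2 by linarith) (show 0 ≤ (1 + r) / 2 by linarith) (by ring)
      simp only [smul_eq_mul] at hc
      refine le_trans (le_of_eq ?_) hc
      congr 1
      rw [hD, Matrix.mul_add, Matrix.mul_smul, Matrix.mul_smul, trace_add, trace_smul, trace_smul,
        Complex.add_re, smul_eq_mul, smul_eq_mul, Complex.re_ofReal_mul, Complex.re_ofReal_mul]
      ring
    refine (integral_mono (integrable_of_cont ν (cont_tr c _))
      (((integrable_of_cont ν (cont_tr c Dp)).const_mul _).add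
        ((integrable_of_cont ν (cont_tr c Dm)).const_mul _)) hpt).trans ?_
    rw [integral_add' ((integrable_of_cont ν (cont_tr c Dp)).const_mul _)
        ((integrable_of_cont ν (cont_tr c Dm)).const_mul _), integral_const_mul,
        integral_const_mul, F_unitary c ν _ hm, F_unitary c ν _ hp']
    apply le_of_eq
    ring

/-- The embedding `h ↦ diag(1, h)`. -/
def embM {n : ℕ} (h : Matrix (Fin n) (Fin n) ℂ) : Matrix (Fin (n + 1)) (Fin (n + 1)) ℂ :=
  Matrix.of (Fin.cons (Fin.cons 1 0) fun i => Fin.cons 0 (h i))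

lemma embM_00 {n : ℕ} (h : Matrix (Fin n) (Fin n) ℂ) : embM h 0 0 = 1 := rfl
lemma embM_0s {n : ℕ} (h : Matrix (Fin n) (Fin n) ℂ) (j : Fin n) : embM h 0 j.succ = 0 := rfl
lemma embM_s0 {n : ℕ} (h : Matrix (Fin n) (Fin n) ℂ) (i : Fin n) : embM h i.succ 0 = 0 := rfl
lemma embM_ss {n : ℕ} (h : Matrix (Fin n) (Fin n) ℂ) (i j : Fin n) :
    embM h i.succ j.succ = h i j := rfl

lemma embM_mem {n : ℕ} (h : Matrix.unitaryGroup (Fin n) ℂ) :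
    embM h.1 ∈ Matrix.unitaryGroup (Fin (n + 1)) ℂ := by
  have hu : h.1 * star h.1 = 1 := mem_unitaryGroup_iff.1 h.2
  rw [mem_unitaryGroup_iff]
  ext i j
  rw [Matrix.mul_apply, Fin.sum_univ_succ]
  simp only [Matrix.star_apply]
  refine Fin.cases ?_ (fun i => ?_) i <;> refine Fin.cases ?_ (fun j => ?_) j
  · simp [embM_00, embM_0s]
  · simp [embM_00, embM_0s, embM_s0, Matrix.one_apply_ne (Fin.succ_ne_zero j).symm]
  · simp [embM_00, embM_0s, embM_s0, Matrix.one_apply_ne (Fin.succ_ne_zero i)]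
  · simp only [embM_s0, embM_ss]
    have e1 : (h.1 * star h.1) i j = (1 : Matrix (Fin n) (Fin n) ℂ) i j := by rw [hu]
    rw [Matrix.mul_apply] at e1
    simp only [Matrix.star_apply] at e1
    simp [Matrix.one_apply] at e1 ⊢
    exact e1

lemma embM_trace {n : ℕ} (h : Matrix (Fin n) (Fin n) ℂ)
    (g : Matrix (Fin (n + 1)) (Fin (n + 1)) ℂ) :
    (embM h * g).trace = g 0 0 + (h * g.submatrix Fin.succ Fin.succ).trace := by
  simp only [Matrix.trace, Matrix.diag_apply, Matrix.mul_apply, Fin.sum_univ_succ, embM_00,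
    embM_0s, embM_s0, embM_ss, Matrix.submatrix_apply]
  simp

lemma hcont_emb {n : ℕ} (c : ℝ) : Continuous (Function.uncurry fun (h : Matrix.unitaryGroup (Fin n) ℂ)
      (g : Matrix.unitaryGroup (Fin (n + 1)) ℂ) =>
        Real.exp (2 * c * (embM h.1 * g.1).trace.re)) := by
  simp only [Function.uncurry_def, embM_trace]
  have c1 : Continuous fun p : Matrix.unitaryGroup (Fin n) ℂ ×
      Matrix.unitaryGroup (Fin (n + 1)) ℂ => p.2.1 0 0 :=
    (cont_entry 0 0).comp continuous_snd
  have c2 : Continuous fun p : Matrix.unitaryGroup (Fin n) ℂ ×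
      Matrix.unitaryGroup (Fin (n + 1)) ℂ =>
        (p.1.1 * p.2.1.submatrix Fin.succ Fin.succ).trace :=
    ((continuous_subtype_val.comp continuous_fst).matrix_mul
      ((continuous_subtype_val.comp continuous_snd).matrix_submatrix _ _)).matrix_trace
  exact Real.continuous_exp.comp
    (continuous_const.mul (Complex.continuous_re.comp (c1.add c2)))

/-- The recursion in the dimension. -/
lemma recursion {n : ℕ} (c : ℝ) (μ : Measure (Matrix.unitaryGroup (Fin (n + 1)) ℂ))
    [μ.IsHaarMeasure] [IsProbabilityMeasure μ] (ν : Measure (Matrix.unitaryGroup (Fin n) ℂ))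
    [ν.IsHaarMeasure] [IsProbabilityMeasure ν] :
    ∫ g, Real.exp (2 * c * g.1.trace.re) ∂μ
      ≤ (∫ g, Real.exp (2 * c * (g.1 0 0).re) ∂μ) * ∫ h, Real.exp (2 * c * h.1.trace.re) ∂ν := by
  have h1 : ∫ g, Real.exp (2 * c * g.1.trace.re) ∂μ
      = ∫ h : Matrix.unitaryGroup (Fin n) ℂ, ∫ g : Matrix.unitaryGroup (Fin (n + 1)) ℂ,
        Real.exp (2 * c * (embM h.1 * g.1).trace.re) ∂μ ∂ν := by
    have : ∀ h : Matrix.unitaryGroup (Fin n) ℂ, ∫ g : Matrix.unitaryGroup (Fin (n + 1)) ℂ,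
        Real.exp (2 * c * (embM h.1 * g.1).trace.re) ∂μ
        = ∫ g, Real.exp (2 * c * g.1.trace.re) ∂μ := fun h =>
      integral_mul_left_eq_self (μ := μ) (fun g : Matrix.unitaryGroup (Fin (n + 1)) ℂ =>
        Real.exp (2 * c * g.1.trace.re)) ⟨embM h.1, embM_mem h⟩
    simp only [this]
    simp
  have hcont := hcont_emb (n := n) c
  rw [h1, integral_integral_swap_of_hasCompactSupport hcont (HasCompactSupport.of_compactSpace _)]
  have h2 : ∀ g : Matrix.unitaryGroup (Fin (n + 1)) ℂ,
      ∫ h : Matrix.unitaryGroup (Fin n) ℂ, Real.exp (2 * c * (embM h.1 * g.1).trace.re) ∂ν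
      = Real.exp (2 * c * (g.1 0 0).re) * ∫ h : Matrix.unitaryGroup (Fin n) ℂ,
        Real.exp (2 * c * (h.1 * g.1.submatrix Fin.succ Fin.succ).trace.re) ∂ν := by
    intro g
    rw [← integral_const_mul]
    refine integral_congr_ae (Filter.Eventually.of_forall fun h => ?_)
    simp only [embM_trace, Complex.add_re, mul_add, Real.exp_add]
  rw [← integral_mul_const]
  have c3 : Continuous fun g : Matrix.unitaryGroup (Fin (n + 1)) ℂ =>
      Real.exp (2 * c * (g.1 0 0).re) :=
    Real.continuous_exp.comp
      (continuous_const.mul (Complex.continuous_re.comp (cont_entry 0 0)))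
  refine integral_mono_of_nonneg (Filter.Eventually.of_forall fun g => ?_)
    ((integrable_of_cont μ c3).mul_const _) (Filter.Eventually.of_forall fun g => ?_)
  · exact integral_nonneg fun h => (Real.exp_pos _).le
  · simp only [h2]
    exact mul_le_mul_of_nonneg_left (block_le c ν g) (Real.exp_pos _).le

/-- Every unit vector is the first row of a unitary matrix. -/
lemma exists_row {n : ℕ} (p : Fin (n + 1) → ℂ) (hp : ∑ j, ‖p j‖ ^ 2 = 1) :
    ∃ R : Matrix.unitaryGroup (Fin (n + 1)) ℂ, ∀ j, R.1 0 j = p j := by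
  let v : Fin (n + 1) → EuclideanSpace ℂ (Fin (n + 1)) := fun _ => WithLp.toLp 2 p
  have hnorm : ‖(WithLp.toLp 2 p : EuclideanSpace ℂ (Fin (n + 1)))‖ = 1 := by
    rw [EuclideanSpace.norm_eq]
    simp [hp]
  have hv : Orthonormal ℂ (({0} : Set (Fin (n + 1))).domRestrict v) := by
    refine ⟨fun i => hnorm, fun i j hij => ?_⟩
    exact absurd (Subsingleton.elim i j) hij
  obtain ⟨b, hb⟩ := hv.exists_orthonormalBasis_extension_of_card_eq (by simp)
  refine ⟨⟨Matrix.of fun i j => b i j, ?_⟩, fun j => ?_⟩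
  · rw [mem_unitaryGroup_iff]
    ext i j
    rw [Matrix.mul_apply]
    have h1 := b.inner_eq_ite j i
    rw [PiLp.inner_apply] at h1
    simp only [RCLike.inner_apply] at h1
    simp only [Matrix.star_apply, Matrix.of_apply, Matrix.one_apply, eq_comm (a := i)]
    exact h1
  · have := hb 0 rfl
    simp [this, v]

lemma cont_lin {n : ℕ} (q : Fin (n + 1) → ℂ) :
    Continuous fun g : Matrix.unitaryGroup (Fin (n + 1)) ℂ => (∑ j, q j * g.1 j 0).re := by
  have : Continuous fun g : Matrix.unitaryGroup (Fin (n + 1)) ℂ => (∑ j, q j * g.1 j 0) :=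
    continuous_finsetSum _ fun j _ => continuous_const.mul (cont_entry j 0)
  fun_prop

lemma inv_unit {n : ℕ} (μ : Measure (Matrix.unitaryGroup (Fin (n + 1)) ℂ))
    [μ.IsHaarMeasure] (f : ℝ → ℝ) (p : Fin (n + 1) → ℂ) (hp : ∑ j, ‖p j‖ ^ 2 = 1) :
    ∫ g, f (∑ j, p j * g.1 j 0).re ∂μ = ∫ g, f (g.1 0 0).re ∂μ := by
  obtain ⟨R, hR⟩ := exists_row p hp
  rw [← integral_mul_left_eq_self (μ := μ)
    (fun g : Matrix.unitaryGroup (Fin (n + 1)) ℂ => f (g.1 0 0).re) R]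
  simp only [Submonoid.coe_mul, Matrix.mul_apply, hR]

lemma inv_hom {n : ℕ} (μ : Measure (Matrix.unitaryGroup (Fin (n + 1)) ℂ))
    [μ.IsHaarMeasure] (k : ℕ) (q : Fin (n + 1) → ℂ) (hq : 0 < ∑ j, ‖q j‖ ^ 2) :
    ∫ g, (∑ j, q j * g.1 j 0).re ^ (2 * k) ∂μ
      = (∑ j, ‖q j‖ ^ 2) ^ k * ∫ g, (g.1 0 0).re ^ (2 * k) ∂μ := by
  set s := ∑ j, ‖q j‖ ^ 2 with hs
  have hss : Real.sqrt s ^ 2 = s := Real.sq_sqrt hq.le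
  have hsp : 0 < Real.sqrt s := Real.sqrt_pos.2 hq
  have h := inv_unit μ (fun x => x ^ (2 * k)) (fun j => ((Real.sqrt s)⁻¹ : ℝ) * q j) (by
    simp only [norm_mul, mul_pow, ← Finset.mul_sum, ← hs, Complex.norm_real, norm_inv,
      Real.norm_eq_abs, sq_abs, inv_pow, hss]
    field_simp)
  rw [← h, ← integral_const_mul]
  refine integral_congr_ae (Filter.Eventually.of_forall fun g => ?_)
  simp only [mul_assoc, ← Finset.mul_sum]
  rw [Complex.re_ofReal_mul, mul_pow, pow_mul (Real.sqrt s)⁻¹, inv_pow, hss]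
  have h1 : s ^ k * s⁻¹ ^ k = 1 := by rw [← mul_pow, mul_inv_cancel₀ hq.ne', one_pow]
  rw [← mul_assoc, h1, one_mul]

/-- Mixed moments. -/
lemma mixed {n : ℕ} (μ : Measure (Matrix.unitaryGroup (Fin (n + 1)) ℂ))
    [μ.IsHaarMeasure] [IsProbabilityMeasure μ] (k : ℕ) (w : Fin (n + 1) → ℂ)
    (hw : ∀ t : ℝ, ∑ j, ‖(Pi.single 0 1 : Fin (n + 1) → ℂ) j + t * w j‖ ^ 2 = 1 + t ^ 2) :
    (2 * k + 1 : ℝ) * ∫ g, (g.1 0 0).re ^ (2 * k) * (∑ j, w j * g.1 j 0).re ^ 2 ∂μ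
      = ∫ g, (g.1 0 0).re ^ (2 * (k + 1)) ∂μ := by
  set X : Matrix.unitaryGroup (Fin (n + 1)) ℂ → ℝ := fun g => (g.1 0 0).re with hX
  set Y : Matrix.unitaryGroup (Fin (n + 1)) ℂ → ℝ := fun g => (∑ j, w j * g.1 j 0).re with hY
  have cX : Continuous X := Complex.continuous_re.comp (cont_entry 0 0)
  have cY : Continuous Y := cont_lin w
  have h1 : ∀ t : ℝ, ∫ g, (t * Y g + X g) ^ (2 * (k + 1)) ∂μ
      = (1 + t ^ 2) ^ (k + 1) * ∫ g, X g ^ (2 * (k + 1)) ∂μ := by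
    intro t
    have := inv_hom μ (k + 1) (fun j => (Pi.single 0 1 : Fin (n + 1) → ℂ) j + t * w j)
      (by rw [hw]; positivity)
    rw [hw] at this
    rw [← this]
    refine integral_congr_ae (Filter.Eventually.of_forall fun g => ?_)
    simp only [add_mul, Finset.sum_add_distrib, mul_assoc, ← Finset.mul_sum, Complex.add_re,
      Complex.re_ofReal_mul, hX, hY]
    simp [Pi.single_apply, add_comm]
  have h2 : ∀ t : ℝ, ∫ g, (t * Y g + X g) ^ (2 * (k + 1)) ∂μ
      = ∑ m ∈ Finset.range (2 * (k + 1) + 1), ((2 * (k + 1)).choose m *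
        ∫ g, Y g ^ m * X g ^ (2 * (k + 1) - m) ∂μ) * t ^ m := by
    intro t
    simp only [add_pow]
    rw [integral_finsetSum]
    · refine Finset.sum_congr rfl fun m _ => ?_
      rw [← integral_const_mul, ← integral_mul_const]
      refine integral_congr_ae (Filter.Eventually.of_forall fun g => ?_)
      simp only [mul_pow]
      ring
    · intro m _
      exact integrable_of_cont μ (by fun_prop)
  have hpoly : (∑ m ∈ Finset.range (2 * (k + 1) + 1), Polynomial.C ((2 * (k + 1)).choose m *
        ∫ g, Y g ^ m * X g ^ (2 * (k + 1) - m) ∂μ) * Polynomial.X ^ m)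
      = Polynomial.expand ℝ 2 ((1 + Polynomial.X) ^ (k + 1))
        * Polynomial.C (∫ g, X g ^ (2 * (k + 1)) ∂μ) := by
    apply Polynomial.funext
    intro t
    rw [Polynomial.eval_finsetSum]
    simp only [Polynomial.eval_mul, Polynomial.eval_C, Polynomial.eval_pow, Polynomial.eval_X,
      Polynomial.expand_eval, Polynomial.eval_add, Polynomial.eval_one]
    rw [← h1, h2]
  have hco := congrArg (fun P => Polynomial.coeff P 2) hpoly
  simp only [Polynomial.coeff_mul_C] at hco
  rw [show Polynomial.coeff (Polynomial.expand ℝ 2 ((1 + Polynomial.X) ^ (k + 1))) 2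
      = (k + 1 : ℝ) by
    have := Polynomial.coeff_expand_mul (R := ℝ) (p := 2) two_pos ((1 + Polynomial.X) ^ (k + 1)) 1
    rw [one_mul] at this
    rw [this, Polynomial.coeff_one_add_X_pow]
    simp] at hco
  rw [Polynomial.finsetSum_coeff] at hco
  simp only [Polynomial.coeff_C_mul_X_pow] at hco
  rw [Finset.sum_ite_eq, if_pos (by simp)] at hco
  have hch : ((2 * (k + 1)).choose 2 : ℝ) = (k + 1) * (2 * k + 1) := by
    rw [Nat.cast_choose_two]
    push_cast
    ring
  rw [hch, show 2 * (k + 1) - 2 = 2 * k by omega] at hco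
  have hk : (k + 1 : ℝ) ≠ 0 := by positivity
  apply mul_left_cancel₀ hk
  rw [← hco]
  rw [← mul_assoc]
  congr 2
  ext g
  ring

lemma w_im0 {n : ℕ} (t : ℝ) :
    ∑ j, ‖(Pi.single 0 1 : Fin (n + 1) → ℂ) j
      + t * (Pi.single 0 (-Complex.I) : Fin (n + 1) → ℂ) j‖ ^ 2 = 1 + t ^ 2 := by
  rw [Fin.sum_univ_succ]
  simp [Complex.sq_norm, Complex.normSq_apply]
  ring

lemma w_succ {n : ℕ} (i : Fin n) (ω : ℂ) (hω : ‖ω‖ = 1) (t : ℝ) :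
    ∑ j, ‖(Pi.single 0 1 : Fin (n + 1) → ℂ) j
      + t * (Pi.single i.succ ω : Fin (n + 1) → ℂ) j‖ ^ 2 = 1 + t ^ 2 := by
  rw [Fin.sum_univ_succ]
  have h0 : (Pi.single i.succ ω : Fin (n + 1) → ℂ) 0 = 0 :=
    Pi.single_eq_of_ne (Fin.succ_ne_zero i).symm _
  rw [h0, Finset.sum_eq_single i]
  · simp [hω]
  · intro b _ hb
    simp [hb]
  · simp

lemma moment_rec {n : ℕ} (μ : Measure (Matrix.unitaryGroup (Fin (n + 1)) ℂ))
    [μ.IsHaarMeasure] [IsProbabilityMeasure μ] (k : ℕ) :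
    (2 * k + 1 : ℝ) * ∫ g, (g.1 0 0).re ^ (2 * k) ∂μ
      = (2 * k + 2 + 2 * n) * ∫ g, (g.1 0 0).re ^ (2 * (k + 1)) ∂μ := by
  set M1 := ∫ g, (g.1 0 0).re ^ (2 * (k + 1)) ∂μ with hM1
  have hre : ∀ j : Fin (n + 1), Continuous fun g : Matrix.unitaryGroup (Fin (n + 1)) ℂ =>
      (g.1 j 0).re := fun j => Complex.continuous_re.comp (cont_entry j 0)
  have him : ∀ j : Fin (n + 1), Continuous fun g : Matrix.unitaryGroup (Fin (n + 1)) ℂ =>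
      (g.1 j 0).im := fun j => Complex.continuous_im.comp (cont_entry j 0)
  have ire : ∀ j : Fin (n + 1), Integrable (fun g : Matrix.unitaryGroup (Fin (n + 1)) ℂ =>
      (g.1 0 0).re ^ (2 * k) * (g.1 j 0).re ^ 2) μ := fun j =>
    integrable_of_cont μ (((hre 0).pow _).mul ((hre j).pow _))
  have iim : ∀ j : Fin (n + 1), Integrable (fun g : Matrix.unitaryGroup (Fin (n + 1)) ℂ =>
      (g.1 0 0).re ^ (2 * k) * (g.1 j 0).im ^ 2) μ := fun j =>
    integrable_of_cont μ (((hre 0).pow _).mul ((him j).pow _))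
  have hcol : ∀ g : Matrix.unitaryGroup (Fin (n + 1)) ℂ,
      ∑ j, ((g.1 j 0).re ^ 2 + (g.1 j 0).im ^ 2) = 1 := by
    intro g
    have hu : star g.1 * g.1 = 1 := mem_unitaryGroup_iff'.1 g.2
    have e4 : (star g.1 * g.1) 0 0 = 1 := by rw [hu]; simp
    rw [Matrix.mul_apply] at e4
    have e5 := congrArg Complex.re e4
    rw [Complex.re_sum] at e5
    simp only [Matrix.star_apply, Complex.star_def, Complex.mul_re, Complex.conj_re,
      Complex.conj_im, Complex.one_re] at e5
    rw [← e5]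
    refine Finset.sum_congr rfl fun j _ => ?_
    ring
  have hM0 : ∫ g, (g.1 0 0).re ^ (2 * k) ∂μ
      = ∑ j, ((∫ g, (g.1 0 0).re ^ (2 * k) * (g.1 j 0).re ^ 2 ∂μ)
        + ∫ g, (g.1 0 0).re ^ (2 * k) * (g.1 j 0).im ^ 2 ∂μ) := by
    rw [Finset.sum_congr rfl fun j _ => (integral_add (ire j) (iim j)).symm,
      ← integral_finsetSum (f := fun j (g : Matrix.unitaryGroup (Fin (n + 1)) ℂ) =>
        (g.1 0 0).re ^ (2 * k) * (g.1 j 0).re ^ 2 + (g.1 0 0).re ^ (2 * k) * (g.1 j 0).im ^ 2)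
        _ fun j _ => (ire j).add (iim j)]
    refine integral_congr_ae (Filter.Eventually.of_forall fun g => ?_)
    simp only [← mul_add, ← Finset.mul_sum, hcol, mul_one]
  have a0 : ∫ g, (g.1 0 0).re ^ (2 * k) * (g.1 0 0).re ^ 2 ∂μ = M1 := by
    rw [hM1]
    refine integral_congr_ae (Filter.Eventually.of_forall fun g => ?_)
    simp only [mul_add, pow_add, mul_one]
  have a1 : (2 * k + 1 : ℝ) * ∫ g, (g.1 0 0).re ^ (2 * k) * (g.1 0 0).im ^ 2 ∂μ = M1 := by
    rw [hM1, ← mixed μ k _ w_im0]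
    congr 2
    ext g
    simp [Pi.single_apply]
  have a2 : ∀ i : Fin n,
      (2 * k + 1 : ℝ) * ∫ g, (g.1 0 0).re ^ (2 * k) * (g.1 i.succ 0).re ^ 2 ∂μ = M1 := by
    intro i
    rw [hM1, ← mixed μ k _ (w_succ i 1 (by simp))]
    congr 2
    ext g
    simp [Pi.single_apply]
  have a3 : ∀ i : Fin n,
      (2 * k + 1 : ℝ) * ∫ g, (g.1 0 0).re ^ (2 * k) * (g.1 i.succ 0).im ^ 2 ∂μ = M1 := by
    intro i
    rw [hM1, ← mixed μ k _ (w_succ i (-Complex.I) (by simp))]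
    congr 2
    ext g
    simp [Pi.single_apply]
  rw [hM0, Fin.sum_univ_succ, mul_add, Finset.mul_sum, a0]
  simp only [mul_add, a1, a2, a3]
  simp
  ring

lemma moment_eq {n : ℕ} (μ : Measure (Matrix.unitaryGroup (Fin (n + 1)) ℂ))
    [μ.IsHaarMeasure] [IsProbabilityMeasure μ] (k : ℕ) :
    (4 : ℝ) ^ k * k.factorial * (n + k).factorial * ∫ g, (g.1 0 0).re ^ (2 * k) ∂μ
      = (2 * k).factorial * n.factorial := by
  induction k with
  | zero => simp
  | succ k ih =>
    have h := moment_rec μ k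
    rw [show n + (k + 1) = n + k + 1 by ring, show 2 * (k + 1) = 2 * k + 1 + 1 by ring,
      Nat.factorial_succ, Nat.factorial_succ, Nat.factorial_succ, Nat.factorial_succ]
    rw [show 2 * (k + 1) = 2 * k + 1 + 1 by ring] at h
    push_cast
    linear_combination (2 * (k : ℝ) + 1 + 1) * (2 * k + 1) * ih
      - 2 * (4 : ℝ) ^ k * k.factorial * (n + k).factorial * (k + 1) * h

lemma exp_hasSum {n : ℕ} (μ : Measure (Matrix.unitaryGroup (Fin (n + 1)) ℂ))
    [μ.IsHaarMeasure] [IsProbabilityMeasure μ] (c : ℝ) :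
    HasSum (fun k : ℕ => n.factorial * (c ^ (2 * k) / (k.factorial * (n + k).factorial)))
      (∫ g, Real.exp (2 * c * (g.1 0 0).re) ∂μ) := by
  have hX : Continuous fun g : Matrix.unitaryGroup (Fin (n + 1)) ℂ => (g.1 0 0).re :=
    Complex.continuous_re.comp (cont_entry 0 0)
  have hneg : ∫ g, Real.exp (-(2 * c * (g.1 0 0).re)) ∂μ
      = ∫ g, Real.exp (2 * c * (g.1 0 0).re) ∂μ := by
    rw [← inv_unit μ (fun x => Real.exp (2 * c * x)) (Pi.single 0 (-1)) (by
      rw [Fin.sum_univ_succ]; simp)]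
    refine integral_congr_ae (Filter.Eventually.of_forall fun g => ?_)
    simp [Pi.single_apply]
  have hcosh : ∫ g, Real.exp (2 * c * (g.1 0 0).re) ∂μ
      = ∫ g, Real.cosh (2 * c * (g.1 0 0).re) ∂μ := by
    simp only [Real.cosh_eq]
    rw [integral_div, integral_add, hneg]
    · ring
    · exact integrable_of_cont μ (by fun_prop)
    · exact integrable_of_cont μ (by fun_prop)
  have hS := hasSum_integral_of_summable_integral_norm (μ := μ)
    (F := fun (k : ℕ) (g : Matrix.unitaryGroup (Fin (n + 1)) ℂ) =>
      (2 * c * (g.1 0 0).re) ^ (2 * k) / ((2 * k).factorial : ℝ))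
    (fun k => integrable_of_cont μ (by fun_prop)) (by
      refine Summable.of_nonneg_of_le (fun k => integral_nonneg fun g => norm_nonneg _)
        (fun k => ?_) (Real.hasSum_cosh (2 * c)).summable
      have : ∀ g : Matrix.unitaryGroup (Fin (n + 1)) ℂ,
          ‖(2 * c * (g.1 0 0).re) ^ (2 * k) / ((2 * k).factorial : ℝ)‖
          ≤ (2 * c) ^ (2 * k) / ((2 * k).factorial : ℝ) := by
        intro g
        have hg : |(g.1 0 0).re| ≤ 1 :=
          (Complex.abs_re_le_norm _).trans (entry_norm_bound_of_unitary g.2 0 0)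
        rw [norm_div, Real.norm_natCast, norm_pow, pow_mul, pow_mul, Real.norm_eq_abs, sq_abs]
        have h1 : (2 * c * (g.1 0 0).re) ^ 2 ≤ (2 * c) ^ 2 := by
          rw [mul_pow]
          have := (sq_le_one_iff_abs_le_one _).2 hg
          nlinarith [sq_nonneg (2 * c)]
        gcongr
      calc _ ≤ ∫ g : Matrix.unitaryGroup (Fin (n + 1)) ℂ,
            (2 * c) ^ (2 * k) / ((2 * k).factorial : ℝ) ∂μ :=
            integral_mono_of_nonneg (Filter.Eventually.of_forall fun g => norm_nonneg _)
              (integrable_const _) (Filter.Eventually.of_forall this)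
        _ = _ := by simp)
  have e1 : (∫ g : Matrix.unitaryGroup (Fin (n + 1)) ℂ, ∑' k : ℕ,
      (2 * c * (g.1 0 0).re) ^ (2 * k) / ((2 * k).factorial : ℝ) ∂μ)
      = ∫ g, Real.cosh (2 * c * (g.1 0 0).re) ∂μ := by
    refine integral_congr_ae (Filter.Eventually.of_forall fun g => ?_)
    exact (Real.hasSum_cosh _).tsum_eq
  have e2 : ∀ k : ℕ, (∫ g : Matrix.unitaryGroup (Fin (n + 1)) ℂ,
      (2 * c * (g.1 0 0).re) ^ (2 * k) / ((2 * k).factorial : ℝ) ∂μ)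
      = n.factorial * (c ^ (2 * k) / (k.factorial * (n + k).factorial)) := by
    intro k
    have h := moment_eq μ k
    rw [integral_div]
    simp only [mul_pow (2 * c)]
    rw [integral_const_mul]
    have f1 : (k.factorial : ℝ) ≠ 0 := by positivity
    have f2 : ((n + k).factorial : ℝ) ≠ 0 := by positivity
    have f3 : ((2 * k).factorial : ℝ) ≠ 0 := by positivity
    have f4 : (2 : ℝ) ^ (2 * k) = 4 ^ k := by rw [pow_mul]; norm_num
    rw [mul_pow, f4]
    field_simp
    linear_combination c ^ (2 * k) * h
  rw [hcosh, ← e1]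
  simp only [← e2]
  exact hS

lemma u_ineq {u : ℝ} (h0 : 0 ≤ u) (h1 : u < 1) :
    (1 + u) * Real.log (1 + u) - (1 - u) * Real.log (1 - u) ≤ 2 * u := by
  have hd : ∀ x ∈ Set.Ico (0 : ℝ) 1, HasDerivAt
      (fun u : ℝ => (1 + u) * Real.log (1 + u) - (1 - u) * Real.log (1 - u) - 2 * u)
      (Real.log (1 + x) + Real.log (1 - x)) x := by
    intro x hx
    have p1 : (1 + x) ≠ 0 := by linarith [hx.1]
    have p2 : (1 - x) ≠ 0 := by linarith [hx.2]
    have d1 := (Real.hasDerivAt_mul_log p1).comp x ((hasDerivAt_id x).const_add 1)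
    have d2 := (Real.hasDerivAt_mul_log p2).comp x ((hasDerivAt_id x).const_sub 1)
    have d3 := (hasDerivAt_id x).const_mul (2 : ℝ)
    have d := (d1.sub d2).sub d3
    refine d.congr_deriv ?_
    simp only [mul_one, mul_neg]
    ring
  have hanti : AntitoneOn
      (fun u : ℝ => (1 + u) * Real.log (1 + u) - (1 - u) * Real.log (1 - u) - 2 * u)
      (Set.Ico 0 1) := by
    apply antitoneOn_of_deriv_nonpos (convex_Ico 0 1)
    · exact fun x hx => (hd x hx).continuousAt.continuousWithinAt
    · rw [interior_Ico]
      exact fun x hx => (hd x ⟨hx.1.le, hx.2⟩).differentiableAt.differentiableWithinAt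
    · rw [interior_Ico]
      intro x hx
      rw [(hd x ⟨hx.1.le, hx.2⟩).deriv, ← Real.log_mul (by linarith [hx.1]) (by linarith [hx.2])]
      apply Real.log_nonpos <;> nlinarith [hx.1, hx.2]
  have := hanti ⟨le_rfl, one_pos⟩ ⟨h0, h1⟩ h0
  simp at this
  linarith

lemma b_bound (k : ℕ) : (k + 1 / 2 : ℝ) * Real.log (k + 1 / 2) - (k + 1 / 2)
    - Real.log k.factorial ≤ Real.log (Real.sqrt Real.pi / 4) := by
  induction k with
  | zero =>
    have h2 : Real.log (Real.sqrt Real.pi / 4) = (Real.log Real.pi - Real.log 16) / 2 := by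
      rw [Real.log_div (by positivity) (by norm_num), Real.log_sqrt Real.pi_pos.le,
        show (16 : ℝ) = 4 ^ 2 by norm_num, Real.log_pow]
      push_cast
      ring
    have h3 : Real.log 8 - 1 ≤ Real.log Real.pi := by
      rw [sub_le_iff_le_add, ← Real.log_exp 1, ← Real.log_mul (by positivity) (by positivity)]
      apply Real.log_le_log (by norm_num)
      nlinarith [Real.pi_gt_three, Real.exp_one_gt_d9]
    have h4 : Real.log 8 = 3 * Real.log 2 := by
      rw [show (8 : ℝ) = 2 ^ 3 by norm_num, Real.log_pow]; norm_num
    have h5 : Real.log 16 = 4 * Real.log 2 := by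
      rw [show (16 : ℝ) = 2 ^ 4 by norm_num, Real.log_pow]; norm_num
    have h6 : Real.log (1 / 2) = - Real.log 2 := by rw [one_div, Real.log_inv]
    simp only [Nat.cast_zero, zero_add, Nat.factorial_zero, Nat.cast_one, Real.log_one]
    rw [h2, h6]
    linarith
  | succ k ih =>
    refine le_trans ?_ ih
    rw [Nat.factorial_succ]
    push_cast
    rw [Real.log_mul (by positivity) (by positivity)]
    have hk : (0 : ℝ) ≤ k := by positivity
    set u : ℝ := 1 / (2 * (k + 1)) with hu
    have hu0 : 0 < u := by positivity
    have hu1 : u < 1 := by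
      rw [hu, div_lt_one (by positivity)]
      linarith
    have e1 : (k + 1 + 1 / 2 : ℝ) = (k + 1) * (1 + u) := by
      rw [hu]; field_simp; try ring
    have e2 : (k + 1 / 2 : ℝ) = (k + 1) * (1 - u) := by
      rw [hu]; field_simp; try ring
    have l1 : Real.log (k + 1 + 1 / 2) = Real.log (k + 1) + Real.log (1 + u) := by
      rw [e1, Real.log_mul (by positivity) (by positivity)]
    have l2 : Real.log (k + 1 / 2) = Real.log (k + 1) + Real.log (1 - u) := by
      rw [e2, Real.log_mul (by positivity) (by linarith)]
    have h := u_ineq hu0.le hu1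
    have hku : (k + 1) * (2 * u) = 1 := by rw [hu]; field_simp
    have h' := mul_le_mul_of_nonneg_left h (show (0 : ℝ) ≤ k + 1 by positivity)
    rw [hku, mul_sub, ← mul_assoc, ← mul_assoc, ← e1, ← e2] at h'
    rw [l1, l2]
    linarith

lemma poisson_bound {c : ℝ} (hc : 0 < c) (k : ℕ) :
    c ^ k / k.factorial ≤ Real.exp c * (Real.sqrt Real.pi / 4 / Real.sqrt c) := by
  have hf : (0 : ℝ) < k.factorial := by positivity
  have hs : 0 < Real.sqrt c := Real.sqrt_pos.2 hc
  have hp : 0 < Real.sqrt Real.pi / 4 := by positivity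
  rw [← Real.log_le_log_iff (by positivity) (by positivity), Real.log_div (by positivity) hf.ne',
    Real.log_pow, Real.log_mul (Real.exp_pos c).ne' (by positivity), Real.log_exp,
    Real.log_div hp.ne' hs.ne', Real.log_sqrt hc.le]
  have h := b_bound k
  set x : ℝ := k + 1 / 2 with hx
  have hx0 : 0 < x := by positivity
  have h2 := Real.log_le_sub_one_of_pos (div_pos hc hx0)
  rw [Real.log_div hc.ne' hx0.ne'] at h2
  have h3 := mul_le_mul_of_nonneg_left h2 hx0.le
  have h4 : x * (c / x - 1) = c - x := by field_simp
  rw [h4] at h3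
  have h5 : (k : ℝ) * Real.log c = x * Real.log c - Real.log c / 2 := by rw [hx]; ring
  rw [h5]
  linarith

lemma S_bound {n : ℕ} (μ : Measure (Matrix.unitaryGroup (Fin (n + 1)) ℂ))
    [μ.IsHaarMeasure] [IsProbabilityMeasure μ] {c : ℝ} (hc : 0 < c) :
    ∫ g, Real.exp (2 * c * (g.1 0 0).re) ∂μ
      ≤ Real.exp (2 * c) * (n.factorial / c ^ n * (Real.sqrt Real.pi / 4 / Real.sqrt c)) := by
  have h1 := exp_hasSum μ c
  have h2 : HasSum (fun k : ℕ => c ^ k / k.factorial) (Real.exp c) := by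
    rw [Real.exp_eq_exp_ℝ]
    exact NormedSpace.expSeries_div_hasSum_exp c
  have h3 := h2.mul_right
    (n.factorial / c ^ n * (Real.exp c * (Real.sqrt Real.pi / 4 / Real.sqrt c)))
  have := hasSum_le (fun k => ?_) h1 h3
  · refine this.trans (le_of_eq ?_)
    rw [two_mul, Real.exp_add]
    ring
  · have hp := poisson_bound hc (n + k)
    calc _ = c ^ k / k.factorial * (n.factorial / c ^ n * (c ^ (n + k) / (n + k).factorial)) := by
          field_simp
          ring
      _ ≤ _ := by gcongr

/-- The right-hand side. -/
noncomputable def T (N : ℕ) (c : ℝ) : ℝ :=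
  (Real.pi / (2 * Real.sqrt 2)) ^ (N ^ 2) * ((Real.sqrt c)⁻¹) ^ (N ^ 2) *
        ((2 * Real.pi) ^ (-(N : ℝ) / 2) *
          ∏ j ∈ Finset.Icc 1 (N - 1), (j.factorial : ℝ))

lemma prod_fact (n : ℕ) : ∏ j ∈ Finset.Icc 1 (n + 1 - 1), (j.factorial : ℝ)
    = (∏ j ∈ Finset.Icc 1 (n - 1), (j.factorial : ℝ)) * n.factorial := by
  cases n with
  | zero => simp
  | succ n => rw [show n + 1 + 1 - 1 = n + 1 by omega, Finset.prod_Icc_succ_top (by omega)]; simp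

lemma T_pos (n : ℕ) {c : ℝ} (hc : 0 < c) : 0 < T n c := by
  have hs : 0 < Real.sqrt c := Real.sqrt_pos.2 hc
  have : 0 < ∏ j ∈ Finset.Icc 1 (n - 1), (j.factorial : ℝ) :=
    Finset.prod_pos fun j _ => by positivity
  unfold T
  have := Real.pi_pos
  positivity

lemma T_succ (n : ℕ) {c : ℝ} (hc : 0 < c) :
    n.factorial / c ^ n * (Real.sqrt Real.pi / 4 / Real.sqrt c) * T n c ≤ T (n + 1) c := by
  have hs : 0 < Real.sqrt c := Real.sqrt_pos.2 hc
  have hpi := Real.pi_pos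
  have hT := T_pos n hc
  have e : T (n + 1) c = (Real.pi / (2 * Real.sqrt 2)) ^ (2 * n) *
      (n.factorial / c ^ n * (Real.sqrt Real.pi / 4 / Real.sqrt c) * T n c) := by
    unfold T
    rw [prod_fact, show (n + 1) ^ 2 = n ^ 2 + 2 * n + 1 by ring]
    have h1 : (2 * Real.pi) ^ (-((n + 1 : ℕ) : ℝ) / 2)
        = (2 * Real.pi) ^ (-(n : ℝ) / 2) * (Real.sqrt (2 * Real.pi))⁻¹ := by
      rw [Real.sqrt_eq_rpow, ← Real.rpow_neg (by positivity), ← Real.rpow_add (by positivity)]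
      congr 1
      push_cast
      ring
    have h2 : ((Real.sqrt c)⁻¹) ^ (2 * n) = (c ^ n)⁻¹ := by
      rw [pow_mul, inv_pow, Real.sq_sqrt hc.le, inv_pow]
    have h3 : Real.pi / (2 * Real.sqrt 2) * (Real.sqrt (2 * Real.pi))⁻¹
        = Real.sqrt Real.pi / 4 := by
      rw [Real.sqrt_mul (by norm_num)]
      have a := Real.mul_self_sqrt hpi.le
      have b := Real.mul_self_sqrt (show (0 : ℝ) ≤ 2 by norm_num)
      have p2 : 0 < Real.sqrt 2 := by positivity
      have p3 : 0 < Real.sqrt Real.pi := by positivity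
      field_simp
      nlinarith
    rw [h1, pow_add, pow_add, pow_add, pow_add, h2, ← h3]
    ring
  rw [e]
  refine le_mul_of_one_le_left (by positivity) (one_le_pow₀ ?_)
  rw [one_le_div (by positivity)]
  have b := Real.sq_sqrt (show (0 : ℝ) ≤ 2 by norm_num)
  nlinarith [Real.pi_gt_three, Real.sqrt_nonneg 2]

lemma main_bound (N : ℕ) {c : ℝ} (hc : 0 < c) :
    ∀ (μ : Measure (Matrix.unitaryGroup (Fin N) ℂ)) [μ.IsHaarMeasure] [IsProbabilityMeasure μ],
    ∫ g, Real.exp (2 * c * g.1.trace.re) ∂μ ≤ Real.exp (2 * c * N) * T N c := by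
  induction N with
  | zero =>
    intro μ _ _
    simp [T, Matrix.trace]
  | succ n ih =>
    intro μ _ _
    let ν : Measure (Matrix.unitaryGroup (Fin n) ℂ) := Measure.haarMeasure ⊤
    have : IsProbabilityMeasure ν := ⟨by
      have := Measure.haarMeasure_self
        (K₀ := (⊤ : TopologicalSpace.PositiveCompacts (Matrix.unitaryGroup (Fin n) ℂ)))
      simpa using this⟩
    refine (recursion c μ ν).trans ?_
    have h1 := ih ν
    have h2 := S_bound μ hc
    calc _ ≤ (Real.exp (2 * c) * (n.factorial / c ^ n
            * (Real.sqrt Real.pi / 4 / Real.sqrt c))) * (Real.exp (2 * c * n) * T n c) := by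
          refine mul_le_mul h2 h1 (integral_nonneg fun h => (Real.exp_pos _).le) (by positivity)
      _ = Real.exp (2 * c * (n + 1 : ℕ)) *
          (n.factorial / c ^ n * (Real.sqrt Real.pi / 4 / Real.sqrt c) * T n c) := by
          push_cast
          rw [mul_add, mul_one, Real.exp_add]
          ring
      _ ≤ _ := mul_le_mul_of_nonneg_left (T_succ n hc) (Real.exp_pos _).le

end SingleBond

theorem single_bond_partition_function_upper_bound (N : ℕ) (c : ℝ) (hc : 0 < c)
    (μ : Measure (Matrix.unitaryGroup (Fin N) ℂ))
    [μ.IsHaarMeasure] [IsProbabilityMeasure μ] :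
    (∫ g : Matrix.unitaryGroup (Fin N) ℂ,
        Real.exp (-c * hsNormSq (1 - (g : Matrix (Fin N) (Fin N) ℂ))) ∂μ) ≤
      (Real.pi / (2 * Real.sqrt 2)) ^ (N ^ 2) * ((Real.sqrt c)⁻¹) ^ (N ^ 2) *
        ((2 * Real.pi) ^ (-(N : ℝ) / 2) *
          ∏ j ∈ Finset.Icc 1 (N - 1), (j.factorial : ℝ)) := by
  have h := SingleBond.main_bound N hc μ
  have e : ∀ g : Matrix.unitaryGroup (Fin N) ℂ,
      Real.exp (-c * hsNormSq (1 - (g : Matrix (Fin N) (Fin N) ℂ)))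
      = Real.exp (-(2 * c * N)) * Real.exp (2 * c * g.1.trace.re) := by
    intro g
    rw [SingleBond.hs_eq, ← Real.exp_add]
    congr 1
    ring
  simp only [e]
  rw [integral_const_mul]
  calc _ ≤ Real.exp (-(2 * c * N)) * (Real.exp (2 * c * N) * SingleBond.T N c) :=
        mul_le_mul_of_nonneg_left h (Real.exp_pos _).le
    _ = SingleBond.T N c := by
        rw [← mul_assoc, ← Real.exp_add, neg_add_cancel, Real.exp_zero, one_mul]
    _ = _ := rfl
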